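/- arXiv:math/0105074 — 3 statements merged into one kernel-verified Lean document; each statement's English description precedes it below -/
import Mathlib

section
/- Under the Abaffian recursion, for all indices 1 ≤ j ≤ i ≤ m one has H_{i+1} Aᵀ vⱼ = 0; that is, the vectors Aᵀv₁,…,Aᵀv_i lie in the null space of the (i+1)-st Abaffian. -/
open Matrix

section AbaffianUpdate

variable {K ι κ : Type*} [Field K] [Fintype ι] [Fintype κ]

/-- One step of the Abaffian recursion: the rank-one update `H - (H a)(wᵀ H) / (wᵀ H a)`, where
`a = Aᵀ v` in the paper. If `wᵀ H a = 0` the value is `H`, since `0⁻¹ = 0`. -/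
def abaffianUpdate (H : Matrix κ ι K) (a : ι → K) (w : κ → K) : Matrix κ ι K :=
  H - (w ⬝ᵥ (H *ᵥ a))⁻¹ • vecMulVec (H *ᵥ a) (w ᵥ* H)

theorem abaffianUpdate_mulVec (H : Matrix κ ι K) (a : ι → K) (w : κ → K) (x : ι → K) :
    abaffianUpdate H a w *ᵥ x =
      H *ᵥ x - ((w ⬝ᵥ (H *ᵥ a))⁻¹ * (w ⬝ᵥ (H *ᵥ x))) • (H *ᵥ a) := by
  rw [abaffianUpdate, sub_mulVec, smul_mulVec, vecMulVec_mulVec, ← dotProduct_mulVec,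
    op_smul_eq_smul, smul_smul]

theorem abaffianUpdate_mulVec_self {H : Matrix κ ι K} {a : ι → K} {w : κ → K}
    (hden : w ⬝ᵥ (H *ᵥ a) ≠ 0) : abaffianUpdate H a w *ᵥ a = 0 := by
  rw [abaffianUpdate_mulVec, inv_mul_cancel₀ hden, one_smul, sub_self]

theorem abaffianUpdate_mulVec_eq_zero {H : Matrix κ ι K} {x : ι → K} (hx : H *ᵥ x = 0)
    (a : ι → K) (w : κ → K) : abaffianUpdate H a w *ᵥ x = 0 := by
  rw [abaffianUpdate_mulVec, hx, dotProduct_zero, mul_zero, zero_smul, sub_zero]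

theorem abaffian_annihilates_scaled_rows_general {m : ℕ} {H : ℕ → Matrix κ ι K}
    {a : Fin m → ι → K} {w : Fin m → κ → K}
    (hden : ∀ i : Fin m, w i ⬝ᵥ (H i *ᵥ a i) ≠ 0)
    (hH : ∀ i : Fin m, H (i + 1) = abaffianUpdate (H i) (a i) (w i))
    {j i : Fin m} (hji : j ≤ i) : H (i + 1) *ᵥ a j = 0 := by
  obtain ⟨k, hk⟩ := i
  replace hji : (j : ℕ) ≤ k := hji
  induction k, hji using Nat.le_induction with
  | base => rw [hH, abaffianUpdate_mulVec_self (hden j)]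
  | succ k _ ih =>
    have hker : H (k + 1) *ᵥ a j = 0 := ih (Nat.lt_of_succ_lt hk)
    rw [hH]
    exact abaffianUpdate_mulVec_eq_zero hker _ _

end AbaffianUpdate

/-- Under the Abaffian recursion (with `H 0 = H₁`), for all `j ≤ i` one has
`H_{i+1} Aᵀ vⱼ = 0`: the vectors `Aᵀv₁,…,Aᵀv_i` lie in the null space of the
`(i+1)`-st Abaffian. -/
theorem abaffian_annihilates_scaled_rows
    (m n : ℕ) (hmn : m ≤ n)
    (A : Matrix (Fin m) (Fin n) ℝ)
    (H : ℕ → Matrix (Fin n) (Fin n) ℝ)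
    (v : Fin m → Fin m → ℝ) (w : Fin m → Fin n → ℝ)
    (hH0 : IsUnit (H 0).det)
    (hHden : ∀ i : Fin m, w i ⬝ᵥ (H ↑i *ᵥ (Aᵀ *ᵥ v i)) ≠ 0)
    (hH : ∀ i : Fin m,
      H (↑i + 1) = H ↑i -
        (w i ⬝ᵥ (H ↑i *ᵥ (Aᵀ *ᵥ v i)))⁻¹ •
          vecMulVec (H ↑i *ᵥ (Aᵀ *ᵥ v i)) (w i ᵥ* H ↑i)) :
    ∀ j i : Fin m, j ≤ i → H (↑i + 1) *ᵥ (Aᵀ *ᵥ v j) = 0 :=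
  fun _ _ hji => abaffian_annihilates_scaled_rows_general hHden hH hji
end

section
/- Under the scaled ABS recursion, the m×m matrix L with entries L_{jk} = vⱼᵀ A p_k is lower triangular with nonzero diagonal entries; that is, vⱼᵀ A p_k = 0 whenever j < k and v_kᵀ A p_k ≠ 0 for every k. In particular L is nonsingular. -/
open Matrix

/-!
Write `a i = Aᵀ v i`. The update of `H i` sends `a i` to `0`, and it sends to `0` every vector that
`H i` already sends to `0`. Hence `H k` annihilates `a j` for all `j < k`, and transposing gives
`v j ⬝ A (p k) = z k ⬝ H k (a j) = 0`.
-/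

theorem dotProduct_mulVec_transpose_mulVec {R l ι κ : Type*} [CommSemiring R] [Fintype l]
    [Fintype ι] [Fintype κ] (A : Matrix ι κ R) (H : Matrix l κ R) (v : ι → R) (z : l → R) :
    v ⬝ᵥ (A *ᵥ (Hᵀ *ᵥ z)) = z ⬝ᵥ (H *ᵥ (Aᵀ *ᵥ v)) := by
  rw [dotProduct_mulVec, dotProduct_comm, mulVec_transpose, mulVec_transpose, ← dotProduct_mulVec]

theorem isUnit_det_iff_of_isLowerTriangular {R ι : Type*} [CommRing R] [Fintype ι]
    [LinearOrder ι] {M : Matrix ι ι R} (hM : M.IsLowerTriangular) :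
    IsUnit M.det ↔ ∀ i, IsUnit (M i i) := by
  rw [det_of_isLowerTriangular M hM, IsUnit.prod_univ_iff]

section ABS

variable {K l ι κ : Type*} [Field K] [Fintype l] [Fintype ι] [Fintype κ]

/-- The ABS update of `H` along `a` with parameter `w` (the Wedderburn rank-one reduction of `H`);
the scaled ABS recursion uses `a = Aᵀ v`. If the pivot `w ⬝ᵥ H *ᵥ a` is zero, then `0⁻¹ = 0` makes
the update leave `H` unchanged. -/
def absUpdate (H : Matrix l κ K) (a : κ → K) (w : l → K) : Matrix l κ K :=
  H - (w ⬝ᵥ (H *ᵥ a))⁻¹ • vecMulVec (H *ᵥ a) (w ᵥ* H)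

theorem absUpdate_mulVec (H : Matrix l κ K) (a : κ → K) (w : l → K) (u : κ → K) :
    absUpdate H a w *ᵥ u = H *ᵥ u - (w ⬝ᵥ (H *ᵥ u) / w ⬝ᵥ (H *ᵥ a)) • (H *ᵥ a) := by
  rw [absUpdate, sub_mulVec, smul_mulVec, vecMulVec_mulVec, ← dotProduct_mulVec,
    op_smul_eq_smul, smul_smul, inv_mul_eq_div]

theorem absUpdate_mulVec_self {H : Matrix l κ K} {a : κ → K} {w : l → K}
    (hpivot : w ⬝ᵥ (H *ᵥ a) ≠ 0) : absUpdate H a w *ᵥ a = 0 := by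
  rw [absUpdate_mulVec, div_self hpivot, one_smul, sub_self]

theorem absUpdate_mulVec_eq_zero {H : Matrix l κ K} {u : κ → K} (hu : H *ᵥ u = 0) (a : κ → K)
    (w : l → K) : absUpdate H a w *ᵥ u = 0 := by
  rw [absUpdate_mulVec, hu, dotProduct_zero, zero_div, zero_smul, sub_zero]

variable {r : ℕ} {H : ℕ → Matrix l κ K} {w : Fin r → l → K}

theorem mulVec_eq_zero_of_absUpdate {a : Fin r → κ → K}
    (hH : ∀ i : Fin r, H (i + 1) = absUpdate (H i) (a i) (w i)) {j : Fin r}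
    (hpivot : w j ⬝ᵥ (H j *ᵥ a j) ≠ 0) {k : ℕ} (hjk : j < k) (hkr : k ≤ r) :
    H k *ᵥ a j = 0 := by
  induction k, hjk using Nat.le_induction with
  | base => rw [hH j, absUpdate_mulVec_self hpivot]
  | succ k _ ih =>
    rw [hH ⟨k, hkr⟩]
    exact absUpdate_mulVec_eq_zero (ih (Nat.le_of_succ_le hkr)) _ _

theorem isLowerTriangular_of_absUpdate {A : Matrix ι κ K} {v : Fin r → ι → K} (z : Fin r → l → K)
    (hpivot : ∀ i : Fin r, w i ⬝ᵥ (H i *ᵥ (Aᵀ *ᵥ v i)) ≠ 0)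
    (hH : ∀ i : Fin r, H (i + 1) = absUpdate (H i) (Aᵀ *ᵥ v i) (w i)) :
    (of fun j k : Fin r => v j ⬝ᵥ (A *ᵥ ((H k)ᵀ *ᵥ z k))).IsLowerTriangular := by
  intro j k hjk
  have annihilates : H k *ᵥ (Aᵀ *ᵥ v j) = 0 :=
    mulVec_eq_zero_of_absUpdate hH (hpivot j) hjk k.is_le'
  rw [of_apply, dotProduct_mulVec_transpose_mulVec, annihilates, dotProduct_zero]

theorem scaledABS_implicit_factorization_lower_triangular_general
    {A : Matrix ι κ K} {v : Fin r → ι → K} {z : Fin r → l → K} {p : Fin r → κ → K}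
    (hp : ∀ i : Fin r, p i = (H i)ᵀ *ᵥ z i)
    (hpden : ∀ i : Fin r, v i ⬝ᵥ (A *ᵥ p i) ≠ 0)
    (hHden : ∀ i : Fin r, w i ⬝ᵥ (H i *ᵥ (Aᵀ *ᵥ v i)) ≠ 0)
    (hH : ∀ i : Fin r, H (i + 1) = absUpdate (H i) (Aᵀ *ᵥ v i) (w i)) :
    (∀ j k : Fin r, j < k → v j ⬝ᵥ (A *ᵥ p k) = 0) ∧
    (∀ k : Fin r, v k ⬝ᵥ (A *ᵥ p k) ≠ 0) ∧
    IsUnit (of fun j k : Fin r => v j ⬝ᵥ (A *ᵥ p k)).det := by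
  obtain rfl : p = fun i : Fin r => (H i)ᵀ *ᵥ z i := funext hp
  have lower := isLowerTriangular_of_absUpdate z hHden hH
  exact ⟨fun _ _ hjk => lower hjk, hpden,
    (isUnit_det_iff_of_isLowerTriangular lower).mpr fun k => (hpden k).isUnit⟩

end ABS

/-- Under the scaled ABS recursion, the `m×m` matrix `L` with entries
`L_{jk} = vⱼᵀ A p_k` is lower triangular with nonzero diagonal entries:
`vⱼᵀ A p_k = 0` for `j < k` and `v_kᵀ A p_k ≠ 0` for every `k`.
In particular `L` is nonsingular. -/
theorem scaledABS_implicit_factorization_lower_triangular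
    (m n : ℕ) (hmn : m ≤ n)
    (A : Matrix (Fin m) (Fin n) ℝ) (b : Fin m → ℝ)
    (H : ℕ → Matrix (Fin n) (Fin n) ℝ) (x : ℕ → Fin n → ℝ)
    (v : Fin m → Fin m → ℝ) (z w : Fin m → Fin n → ℝ)
    (p : Fin m → Fin n → ℝ)
    (hH0 : IsUnit (H 0).det)
    (hp : ∀ i : Fin m, p i = (H ↑i)ᵀ *ᵥ z i)
    (hpden : ∀ i : Fin m, v i ⬝ᵥ (A *ᵥ p i) ≠ 0)
    (hx : ∀ i : Fin m,
      x (↑i + 1) = x ↑i - ((v i ⬝ᵥ (A *ᵥ x ↑i - b)) / (v i ⬝ᵥ (A *ᵥ p i))) • p i)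
    (hHden : ∀ i : Fin m, w i ⬝ᵥ (H ↑i *ᵥ (Aᵀ *ᵥ v i)) ≠ 0)
    (hH : ∀ i : Fin m,
      H (↑i + 1) = H ↑i -
        (w i ⬝ᵥ (H ↑i *ᵥ (Aᵀ *ᵥ v i)))⁻¹ •
          vecMulVec (H ↑i *ᵥ (Aᵀ *ᵥ v i)) (w i ᵥ* H ↑i)) :
    (∀ j k : Fin m, j < k → v j ⬝ᵥ (A *ᵥ p k) = 0) ∧
    (∀ k : Fin m, v k ⬝ᵥ (A *ᵥ p k) ≠ 0) ∧
    IsUnit (Matrix.of fun j k : Fin m => v j ⬝ᵥ (A *ᵥ p k)).det :=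
  scaledABS_implicit_factorization_lower_triangular_general hp hpden hHden hH
end

section
/- Under the Huang recursion with linearly independent rows a₁,…,a_m and with iterates defined by x₁ = 0 and x_{i+1} = x_i − ((a_iᵀ x_i − b_i)/(a_iᵀ p_i)) p_i, for every i = 1,…,m the vector x_{i+1} is the unique minimum Euclidean norm solution of the first i equations: aⱼᵀ x_{i+1} = bⱼ for all j ≤ i, and ‖x_{i+1}‖₂ ≤ ‖x‖₂ for every x ∈ ℝⁿ satisfying aⱼᵀ x = bⱼ for all j ≤ i, with equality only for x = x_{i+1}. Moreover the norms increase monotonically: ‖x_i‖₂ ≤ ‖x_{i+1}‖₂ for every i. -/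
open Matrix

/-!
Let `V k` be the span of the first `k` rows. The Huang matrix `H k` is the orthogonal projection
onto the complement of `V k`: the rank-one update enlarges the kernel by exactly the next row.
Hence the search direction `H k *ᵥ a k` lies in `V (k + 1)` and is orthogonal to `V k`, so that a
step along it preserves the equations already solved, and the displacement `x k - x 0` stays in
`V k`. The difference of two solutions of the first `k` equations is orthogonal to `V k`, and
Pythagoras makes `x k` the solution nearest to `x 0`.
-/

section EuclideanLength

variable {ι R : Type*} [Fintype ι]

theorem dotProduct_self_eq_add_of_orthogonal [CommRing R] {u v : ι → R}
    (h : u ⬝ᵥ (v - u) = 0) : v ⬝ᵥ v = u ⬝ᵥ u + (v - u) ⬝ᵥ (v - u) := by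
  have hcomm := dotProduct_comm v u
  simp only [dotProduct_sub, sub_dotProduct] at h ⊢
  linear_combination 2 * h + hcomm

theorem dotProduct_self_nonneg [Ring R] [LinearOrder R] [IsOrderedRing R] (v : ι → R) :
    0 ≤ v ⬝ᵥ v :=
  Finset.sum_nonneg fun i _ => mul_self_nonneg (v i)

theorem sqrt_dotProduct_self_le_of_orthogonal {u v : ι → ℝ} (h : u ⬝ᵥ (v - u) = 0) :
    √(u ⬝ᵥ u) ≤ √(v ⬝ᵥ v) := by
  refine Real.sqrt_le_sqrt ?_
  rw [dotProduct_self_eq_add_of_orthogonal h]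
  exact le_add_of_nonneg_right (dotProduct_self_nonneg _)

theorem eq_of_orthogonal_of_sqrt_dotProduct_self_eq {u v : ι → ℝ} (h : u ⬝ᵥ (v - u) = 0)
    (hlen : √(v ⬝ᵥ v) = √(u ⬝ᵥ u)) : v = u := by
  rw [Real.sqrt_inj (dotProduct_self_nonneg v) (dotProduct_self_nonneg u),
    dotProduct_self_eq_add_of_orthogonal h, add_eq_left] at hlen
  exact sub_eq_zero.mp (dotProduct_self_eq_zero.mp hlen)

end EuclideanLength

section LeadingSpan

variable {R M : Type*} {m : ℕ}

/-- The span of the first `k` members of a finite family. The bound `k` is a natural number, so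
that the span of the whole family `Fin m → M` is included, as `k = m`. -/
def leadingSpan (R : Type*) [Semiring R] [AddCommMonoid M] [Module R M] (a : Fin m → M) (k : ℕ) :
    Submodule R M :=
  Submodule.span R (a '' {j | (j : ℕ) < k})

theorem mem_leadingSpan [Semiring R] [AddCommMonoid M] [Module R M] (a : Fin m → M) {k : ℕ}
    {j : Fin m} (hj : (j : ℕ) < k) : a j ∈ leadingSpan R a k :=
  Submodule.subset_span ⟨j, hj, rfl⟩

theorem leadingSpan_zero [Semiring R] [AddCommMonoid M] [Module R M] (a : Fin m → M) :
    leadingSpan R a 0 = ⊥ := by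
  simp [leadingSpan]

theorem leadingSpan_succ [Semiring R] [AddCommMonoid M] [Module R M] (a : Fin m → M)
    (i : Fin m) : leadingSpan R a (i + 1) = leadingSpan R a i ⊔ R ∙ a i := by
  have hinsert : {j : Fin m | (j : ℕ) < i + 1} = insert i {j : Fin m | (j : ℕ) < i} := by
    ext j
    simp only [Set.mem_ofPred_eq, Set.mem_insert_iff, Fin.ext_iff]
    omega
  rw [leadingSpan, hinsert, Set.image_insert_eq, Submodule.span_insert, sup_comm, leadingSpan]

theorem dotProduct_eq_zero_of_mem_leadingSpan {ι : Type*} [Fintype ι] [CommSemiring R]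
    {a : Fin m → ι → R} {k : ℕ} {u z : ι → R} (hu : u ∈ leadingSpan R a k)
    (hz : ∀ j : Fin m, (j : ℕ) < k → a j ⬝ᵥ z = 0) : u ⬝ᵥ z = 0 := by
  induction hu using Submodule.span_induction with
  | mem _ hv => obtain ⟨j, hj, rfl⟩ := hv; exact hz j hj
  | zero => exact zero_dotProduct z
  | add v w _ _ hv hw => rw [add_dotProduct, hv, hw, add_zero]
  | smul r v _ hv => rw [smul_dotProduct, hv, smul_zero]

end LeadingSpan

section SolveAlong

variable {ι K : Type*} [Fintype ι] [Field K]

/-- The point of the line through `x` with direction `p` at which `c ⬝ᵥ ·` takes the value `β`.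
If `c ⬝ᵥ p = 0`, division by zero makes it `x` itself. -/
def solveAlong (p c : ι → K) (β : K) (x : ι → K) : ι → K :=
  x - ((c ⬝ᵥ x - β) / (c ⬝ᵥ p)) • p

theorem dotProduct_solveAlong_self {p c : ι → K} (hp : c ⬝ᵥ p ≠ 0) (β : K) (x : ι → K) :
    c ⬝ᵥ solveAlong p c β x = β := by
  rw [solveAlong, dotProduct_sub, dotProduct_smul, smul_eq_mul, div_mul_cancel₀ _ hp,
    sub_sub_cancel]

theorem dotProduct_solveAlong_of_orthogonal {p d : ι → K} (hp : d ⬝ᵥ p = 0) (c : ι → K) (β : K)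
    (x : ι → K) : d ⬝ᵥ solveAlong p c β x = d ⬝ᵥ x := by
  rw [solveAlong, dotProduct_sub, dotProduct_smul, hp, smul_zero, sub_zero]

theorem solveAlong_sub_mem {V : Submodule K (ι → K)} {p x x₀ : ι → K} (hp : p ∈ V)
    (hx : x - x₀ ∈ V) (c : ι → K) (β : K) : solveAlong p c β x - x₀ ∈ V := by
  rw [solveAlong, sub_right_comm]
  exact V.sub_mem hx (V.smul_mem _ hp)

end SolveAlong

section HuangUpdate

variable {ι K : Type*} [Fintype ι] [Field K]

/-- The rank-one update of the Huang recursion, which makes `c` a null vector of `H`. It leaves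
`H` unchanged if `c ⬝ᵥ (H *ᵥ c) = 0`, because the inverse is then zero. -/
def huangUpdate (H : Matrix ι ι K) (c : ι → K) : Matrix ι ι K :=
  H - (c ⬝ᵥ (H *ᵥ c))⁻¹ • vecMulVec (H *ᵥ c) (c ᵥ* H)

theorem huangUpdate_mulVec (H : Matrix ι ι K) (c z : ι → K) :
    huangUpdate H c *ᵥ z =
      H *ᵥ z - ((c ⬝ᵥ (H *ᵥ c))⁻¹ * (c ⬝ᵥ (H *ᵥ z))) • (H *ᵥ c) := by
  rw [huangUpdate, sub_mulVec, smul_mulVec, vecMulVec_mulVec, ← dotProduct_mulVec,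
    op_smul_eq_smul, smul_smul]

theorem huangUpdate_mulVec_self {H : Matrix ι ι K} {c : ι → K} (hc : c ⬝ᵥ (H *ᵥ c) ≠ 0) :
    huangUpdate H c *ᵥ c = 0 := by
  rw [huangUpdate_mulVec, inv_mul_cancel₀ hc, one_smul, sub_self]

theorem isSymm_huangUpdate {H : Matrix ι ι K} (hH : H.IsSymm) (c : ι → K) :
    (huangUpdate H c).IsSymm := by
  have hrow : c ᵥ* H = H *ᵥ c := by rw [← mulVec_transpose, hH.eq]
  rw [Matrix.IsSymm, huangUpdate, hrow, transpose_sub, transpose_smul, transpose_vecMulVec, hH.eq]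

/-- `H` is the orthogonal projection with kernel `V`. Idempotency follows from the two conditions
on `V`, and symmetry makes the range orthogonal to `V`. -/
structure IsOrthogonalProjectionAlong (H : Matrix ι ι K) (V : Submodule K (ι → K)) : Prop where
  isSymm : H.IsSymm
  mulVec_eq_zero : ∀ v ∈ V, H *ᵥ v = 0
  sub_mulVec_mem : ∀ z, z - H *ᵥ z ∈ V

namespace IsOrthogonalProjectionAlong

variable {H : Matrix ι ι K} {V : Submodule K (ι → K)}

theorem one_bot [DecidableEq ι] : IsOrthogonalProjectionAlong (1 : Matrix ι ι K) ⊥ where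
  isSymm := isSymm_one
  mulVec_eq_zero v hv := by rw [one_mulVec, (Submodule.mem_bot K).mp hv]
  sub_mulVec_mem z := by rw [one_mulVec, sub_self]; exact zero_mem _

theorem dotProduct_mulVec_eq_zero (hH : IsOrthogonalProjectionAlong H V) {v : ι → K}
    (hv : v ∈ V) (w : ι → K) : v ⬝ᵥ (H *ᵥ w) = 0 := by
  rw [dotProduct_mulVec, ← mulVec_transpose, hH.isSymm.eq, hH.mulVec_eq_zero v hv,
    zero_dotProduct]

theorem mulVec_mem_sup (hH : IsOrthogonalProjectionAlong H V) (c : ι → K) :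
    H *ᵥ c ∈ V ⊔ K ∙ c := by
  rw [← sub_sub_cancel c (H *ᵥ c)]
  exact sub_mem (Submodule.mem_sup_right (Submodule.mem_span_singleton_self c))
    (Submodule.mem_sup_left (hH.sub_mulVec_mem c))

theorem huangUpdate_sup (hH : IsOrthogonalProjectionAlong H V) {c : ι → K}
    (hc : c ⬝ᵥ (H *ᵥ c) ≠ 0) : IsOrthogonalProjectionAlong (huangUpdate H c) (V ⊔ K ∙ c) where
  isSymm := isSymm_huangUpdate hH.isSymm c
  mulVec_eq_zero := by
    have hV : V ≤ LinearMap.ker (huangUpdate H c).mulVecLin := fun v hv => by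
      rw [LinearMap.mem_ker, mulVecLin_apply, huangUpdate_mulVec, hH.mulVec_eq_zero v hv,
        dotProduct_zero, mul_zero, zero_smul, sub_zero]
    have hspan : K ∙ c ≤ LinearMap.ker (huangUpdate H c).mulVecLin := by
      rw [Submodule.span_singleton_le_iff_mem]
      exact huangUpdate_mulVec_self hc
    exact fun v hv => sup_le hV hspan hv
  sub_mulVec_mem z := by
    rw [huangUpdate_mulVec, sub_sub_eq_add_sub, add_sub_right_comm]
    exact add_mem (Submodule.mem_sup_left (hH.sub_mulVec_mem z))
      (Submodule.smul_mem _ _ (hH.mulVec_mem_sup c))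

end IsOrthogonalProjectionAlong

end HuangUpdate

section HuangIteration

variable {ι K : Type*} [Fintype ι] [DecidableEq ι] [Field K] {m : ℕ}

/-- `H` and `x` are the matrices and iterates of the Huang algorithm for the equations
`a i ⬝ᵥ x = b i`, started at an arbitrary point `x 0`. Indices are shifted down by one against the
usual `H₁`, `x₁`, and terms beyond index `m` are unconstrained. -/
structure IsHuangIteration (a : Fin m → ι → K) (b : Fin m → K) (H : ℕ → Matrix ι ι K)
    (x : ℕ → ι → K) : Prop where
  matrix_zero : H 0 = 1
  pivot_ne_zero : ∀ i : Fin m, a i ⬝ᵥ (H i *ᵥ a i) ≠ 0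
  matrix_succ : ∀ i : Fin m, H (i + 1) = huangUpdate (H i) (a i)
  iterate_succ : ∀ i : Fin m, x (i + 1) = solveAlong ((H i)ᵀ *ᵥ a i) (a i) (b i) (x i)

namespace IsHuangIteration

variable {a : Fin m → ι → K} {b : Fin m → K} {H : ℕ → Matrix ι ι K} {x : ℕ → ι → K}

theorem isOrthogonalProjectionAlong (h : IsHuangIteration a b H x) {k : ℕ} (hk : k ≤ m) :
    IsOrthogonalProjectionAlong (H k) (leadingSpan K a k) := by
  induction k with
  | zero => rw [h.matrix_zero, leadingSpan_zero]; exact .one_bot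
  | succ k ih =>
    let i : Fin m := ⟨k, hk⟩
    have hupdate := (ih (Nat.le_of_succ_le hk)).huangUpdate_sup (h.pivot_ne_zero i)
    rwa [← h.matrix_succ i, ← leadingSpan_succ a i] at hupdate

theorem iterate_succ_eq_solveAlong_mulVec (h : IsHuangIteration a b H x) (i : Fin m) :
    x (i + 1) = solveAlong (H i *ᵥ a i) (a i) (b i) (x i) := by
  rw [h.iterate_succ i, (h.isOrthogonalProjectionAlong i.isLt.le).isSymm.eq]

theorem sub_mem_leadingSpan (h : IsHuangIteration a b H x) {k : ℕ} (hk : k ≤ m) :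
    x k - x 0 ∈ leadingSpan K a k := by
  induction k with
  | zero => rw [sub_self]; exact zero_mem _
  | succ k ih =>
    let i : Fin m := ⟨k, hk⟩
    have hdirection := (h.isOrthogonalProjectionAlong i.isLt.le).mulVec_mem_sup (a i)
    rw [h.iterate_succ_eq_solveAlong_mulVec i, leadingSpan_succ a i]
    exact solveAlong_sub_mem hdirection
      (Submodule.mem_sup_left (ih (Nat.le_of_succ_le hk))) (a i) (b i)

theorem dotProduct_iterate_eq (h : IsHuangIteration a b H x) {k : ℕ} (hk : k ≤ m) (j : Fin m)
    (hj : (j : ℕ) < k) : a j ⬝ᵥ x k = b j := by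
  induction k with
  | zero => exact absurd hj (Nat.not_lt_zero _)
  | succ k ih =>
    let i : Fin m := ⟨k, hk⟩
    rw [h.iterate_succ_eq_solveAlong_mulVec i]
    rcases Nat.lt_succ_iff_lt_or_eq.mp hj with hlt | heq
    · have horthogonal : a j ⬝ᵥ (H i *ᵥ a i) = 0 :=
        (h.isOrthogonalProjectionAlong i.isLt.le).dotProduct_mulVec_eq_zero
          (mem_leadingSpan a hlt) (a i)
      rw [dotProduct_solveAlong_of_orthogonal horthogonal]
      exact ih (Nat.le_of_succ_le hk) hlt
    · obtain rfl : i = j := Fin.ext heq.symm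
      exact dotProduct_solveAlong_self (h.pivot_ne_zero i) (b i) (x i)

theorem displacement_orthogonal (h : IsHuangIteration a b H x) {k : ℕ} (hk : k ≤ m) {y : ι → K}
    (hy : ∀ j : Fin m, (j : ℕ) < k → a j ⬝ᵥ y = b j) :
    (x k - x 0) ⬝ᵥ ((y - x 0) - (x k - x 0)) = 0 := by
  refine dotProduct_eq_zero_of_mem_leadingSpan (h.sub_mem_leadingSpan hk) fun j hj => ?_
  rw [sub_sub_sub_cancel_right, dotProduct_sub, hy j hj, h.dotProduct_iterate_eq hk j hj, sub_self]

end IsHuangIteration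

end HuangIteration

theorem huang_minimum_norm_solution_general {ι : Type*} [Fintype ι] [DecidableEq ι] {m : ℕ}
    {a : Fin m → ι → ℝ} {b : Fin m → ℝ} {H : ℕ → Matrix ι ι ℝ} {x : ℕ → ι → ℝ}
    (h : IsHuangIteration a b H x) (i : Fin m) :
    (∀ j : Fin m, j ≤ i → a j ⬝ᵥ x (i + 1) = b j) ∧
    (∀ y : ι → ℝ, (∀ j : Fin m, j ≤ i → a j ⬝ᵥ y = b j) →
      √((x (i + 1) - x 0) ⬝ᵥ (x (i + 1) - x 0)) ≤ √((y - x 0) ⬝ᵥ (y - x 0)) ∧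
      (√((y - x 0) ⬝ᵥ (y - x 0)) = √((x (i + 1) - x 0) ⬝ᵥ (x (i + 1) - x 0)) →
        y = x (i + 1))) ∧
    √((x i - x 0) ⬝ᵥ (x i - x 0)) ≤ √((x (i + 1) - x 0) ⬝ᵥ (x (i + 1) - x 0)) := by
  have hsolves := h.dotProduct_iterate_eq i.isLt
  refine ⟨fun j hj => hsolves j (Nat.lt_succ_of_le hj), fun y hy => ?_, ?_⟩
  · have horthogonal := h.displacement_orthogonal i.isLt fun j hj => hy j (Nat.le_of_lt_succ hj)
    exact ⟨sqrt_dotProduct_self_le_of_orthogonal horthogonal, fun hlen =>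
      sub_left_injective (eq_of_orthogonal_of_sqrt_dotProduct_self_eq horthogonal hlen)⟩
  · exact sqrt_dotProduct_self_le_of_orthogonal
      (h.displacement_orthogonal i.isLt.le fun j hj => hsolves j (Nat.lt_succ_of_lt hj))

/-- **Minimum norm property of the Huang algorithm.** Under the Huang recursion
with linearly independent rows `a₁,…,a_m` and iterates started at `x₁ = 0`
(here `x 0 = x₁`), each `x_{i+1}` is the unique minimum Euclidean norm solution
of the first `i` equations, and the norms `‖x_i‖₂` increase monotonically. -/
theorem huang_minimum_norm_solution
    (m n : ℕ) (hmn : m ≤ n)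
    (a : Fin m → Fin n → ℝ) (ha : LinearIndependent ℝ a) (b : Fin m → ℝ)
    (H : ℕ → Matrix (Fin n) (Fin n) ℝ) (hH0 : H 0 = 1)
    (hHden : ∀ i : Fin m, a i ⬝ᵥ (H ↑i *ᵥ a i) ≠ 0)
    (p : Fin m → Fin n → ℝ)
    (hp : ∀ i : Fin m, p i = (H ↑i)ᵀ *ᵥ a i)
    (hH : ∀ i : Fin m,
      H (↑i + 1) = H ↑i -
        (a i ⬝ᵥ (H ↑i *ᵥ a i))⁻¹ •
          vecMulVec (H ↑i *ᵥ a i) (a i ᵥ* H ↑i))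
    (x : ℕ → Fin n → ℝ) (hx0 : x 0 = 0)
    (hx : ∀ i : Fin m,
      x (↑i + 1) = x ↑i - ((a i ⬝ᵥ x ↑i - b i) / (a i ⬝ᵥ p i)) • p i) :
    ∀ i : Fin m,
      (∀ j : Fin m, j ≤ i → a j ⬝ᵥ x (↑i + 1) = b j) ∧
      (∀ y : Fin n → ℝ, (∀ j : Fin m, j ≤ i → a j ⬝ᵥ y = b j) →
        Real.sqrt (x (↑i + 1) ⬝ᵥ x (↑i + 1)) ≤ Real.sqrt (y ⬝ᵥ y) ∧
        (Real.sqrt (y ⬝ᵥ y) = Real.sqrt (x (↑i + 1) ⬝ᵥ x (↑i + 1)) → y = x (↑i + 1))) ∧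
      Real.sqrt (x ↑i ⬝ᵥ x ↑i) ≤ Real.sqrt (x (↑i + 1) ⬝ᵥ x (↑i + 1)) := by
  have h : IsHuangIteration a b H x := ⟨hH0, hHden, hH, fun i => hp i ▸ hx i⟩
  simpa only [hx0, sub_zero] using huang_minimum_norm_solution_general h
end
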